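/- arXiv:math/0511214 — 3 statements merged into one kernel-verified Lean document; each statement's English description precedes it below -/
import Mathlib

section
/- Let K be a commutative ℚ-algebra, d ≥ 2, and P ∈ K[X₁,…,Xₙ] homogeneous of degree d+1 with (Hess P)³ = 0. Set H = ∇P and F = X − H. Then F has the polynomial inverse G = (G₁,…,Gₙ) given by G_i = X_i + D_iP + D_i( (1/2) Σ_{j=1}^{n} (D_jP)² ); that is, F_i(G₁,…,Gₙ) = X_i and G_i(F₁,…,Fₙ) = X_i for all i. Moreover, the total degree of each G_i is at most 2d−1. -/
/-!
Write `H = ∇P`, `A = Hess P`, `q = ½ ∑ⱼ Hⱼ²` and `B = ∇q = A H`. Euler's identity gives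
`A X = d H`, so `d A² H = A³ X = 0` and `A² H = 0`. Since `A` is symmetric, `B ⬝ B = H ⬝ A² H = 0`
and `d (H ⬝ B) = A X ⬝ A H = X ⬝ A² H = 0` (`dotProduct_eq_zero_of_cube_eq_zero`).
The relations `H ⬝ B = 0` and `B ⬝ B = 0` say that `Q = P + t q`
solves the Hamilton-Jacobi equation `∂Q/∂t = ½ |∇Q|²`, and differentiating the two relations shows
that `N = ∇Q = H + t B` solves the Burgers equation `∂N/∂t = (JN) N`.

By the method of characteristics, `N` is constant along `t ↦ X - t H`: the polynomials
`uᵢ = Nᵢ(X - t H) - Hᵢ` satisfy a homogeneous linear system `u' = c u` with `u(0) = 0`, and over a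
`ℚ`-algebra this forces `u = 0` (`eq_zero_of_linear_ode`). Thus
`N(X - t H) = H` (`characteristics`), so substituting `X - t H` into `X + t N` gives `X`, which at `t = 1` is `G(F) = X`.

For the composition in the other order, substitution of `X - t H` is the identity modulo `t`, so
it is an injective endomorphism of `K[X][t]` (`eval₂RingHom_injective`), and a right inverse
of an injective map is also a left inverse.
-/

open MvPolynomial

/-- The Hessian matrix `(DᵢDⱼP)` of a multivariate polynomial. -/
noncomputable def hessian {n : ℕ} {K : Type*} [CommRing K]
    (P : MvPolynomial (Fin n) K) :
    Matrix (Fin n) (Fin n) (MvPolynomial (Fin n) K) :=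
  Matrix.of fun i j => MvPolynomial.pderiv i (MvPolynomial.pderiv j P)

/-- A polynomial solution of a homogeneous linear system of differential equations that vanishes
at the origin is zero, in characteristic zero. -/
lemma eq_zero_of_linear_ode {ι R : Type*} [Fintype ι] [CommRing R] [Algebra ℚ R]
    (u : ι → Polynomial R) (c : ι → ι → Polynomial R)
    (hu : ∀ i, Polynomial.derivative (u i) = ∑ j, c i j * u j)
    (h0 : ∀ i, (u i).coeff 0 = 0) : ∀ i, u i = 0 := by
  have key : ∀ k i, (u i).coeff k = 0 := by
    intro k
    induction k using Nat.strong_induction_on with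
    | _ k ih =>
      intro i
      rcases k with _ | k
      · exact h0 i
      have h := congrArg (fun p => Polynomial.coeff p k) (hu i)
      simp only [Polynomial.coeff_derivative, Polynomial.finsetSum_coeff,
        Polynomial.coeff_mul] at h
      rw [Finset.sum_eq_zero] at h
      · have h2 : algebraMap ℚ R ((k : ℚ) + 1) * algebraMap ℚ R ((k : ℚ) + 1)⁻¹ = 1 := by
          rw [← map_mul, mul_inv_cancel₀ (by positivity), map_one]
        have h3 : algebraMap ℚ R ((k : ℚ) + 1) = (k : R) + 1 := by simp
        rw [h3] at h2
        linear_combination (-(u i).coeff (k + 1)) * h2 +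
          algebraMap ℚ R ((k : ℚ) + 1)⁻¹ * h
      · intro j _
        refine Finset.sum_eq_zero fun x hx => ?_
        have := Finset.HasAntidiagonal.mem_antidiagonal.mp hx
        rw [ih x.2 (by omega), mul_zero]
  intro i
  ext k
  simpa using key k i

/-- A ring homomorphism `R → R[t]` that is the identity modulo `t` extends to an injective
`t`-linear endomorphism of `R[t]`. -/
lemma eval₂RingHom_injective {R : Type*} [CommRing R] (φ : R →+* Polynomial R)
    (hφ : ∀ r, (φ r).coeff 0 = r) :
    Function.Injective (Polynomial.eval₂RingHom φ Polynomial.X) := by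
  rw [injective_iff_map_eq_zero]
  -- induction on the degree: the constant coefficient vanishes, so a factor `t` can be removed
  have key : ∀ k (f : Polynomial R), f.natDegree ≤ k →
      Polynomial.eval₂RingHom φ Polynomial.X f = 0 → f = 0 := by
    have hdiv : ∀ f : Polynomial R, Polynomial.eval₂RingHom φ Polynomial.X f = 0 →
        f.coeff 0 = 0 ∧ Polynomial.eval₂RingHom φ Polynomial.X f.divX = 0 := by
      intro f hf
      rw [← Polynomial.divX_mul_X_add f, map_add, map_mul] at hf
      simp only [Polynomial.coe_eval₂RingHom, Polynomial.eval₂_X, Polynomial.eval₂_C] at hf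
      have h0 := congrArg (fun p => Polynomial.coeff p 0) hf
      simp [hφ] at h0
      refine ⟨h0, ?_⟩
      rw [h0, map_zero, add_zero] at hf
      ext k
      have := congrArg (fun p => Polynomial.coeff p (k + 1)) hf
      simpa using this
    intro k
    induction k with
    | zero =>
      intro f hk hf
      rw [Polynomial.eq_C_of_natDegree_le_zero hk, (hdiv f hf).1, map_zero]
    | succ k ih =>
      intro f hk hf
      have h := ih f.divX (by rw [Polynomial.natDegree_divX_eq_natDegree_tsub_one]; omega)
        (hdiv f hf).2
      rw [← Polynomial.divX_mul_X_add f, h, (hdiv f hf).1]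
      simp
  exact fun f hf => key _ f le_rfl hf

lemma pderiv_pderiv_comm {σ K : Type*} [CommRing K] (i j : σ) (f : MvPolynomial σ K) :
    pderiv i (pderiv j f) = pderiv j (pderiv i f) := by
  classical
  have h : ⁅(pderiv i : Derivation K (MvPolynomial σ K) (MvPolynomial σ K)),
      (pderiv j : Derivation K (MvPolynomial σ K) (MvPolynomial σ K))⁆ = 0 := by
    apply MvPolynomial.derivation_ext
    intro k
    rw [Derivation.commutator_apply]
    simp [pderiv_X, Pi.single_apply, apply_ite]
  have := congrArg (fun D => D f) h
  simpa [Derivation.commutator_apply, sub_eq_zero] using this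

/-- The chain rule for `d/dt` of a polynomial evaluated along a polynomial curve. -/
lemma derivative_aeval {n : ℕ} {K R : Type*} [CommRing K] [CommRing R] [Algebra K R]
    (g : Fin n → Polynomial R) (f : MvPolynomial (Fin n) K) :
    Polynomial.derivative (aeval g f) =
      ∑ j, aeval g (pderiv j f) * Polynomial.derivative (g j) := by
  classical
  induction f using MvPolynomial.induction_on with
  | C a => simp [Polynomial.algebraMap_apply]
  | add p q hp hq => simp [hp, hq, add_mul, Finset.sum_add_distrib]
  | mul_X p i hp =>
    have h : ∀ j, aeval g (pderiv j (p * X i)) * Polynomial.derivative (g j) =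
        aeval g (pderiv j p) * Polynomial.derivative (g j) * g i +
          (if i = j then aeval g p * Polynomial.derivative (g j) else 0) := by
      intro j
      rw [Derivation.leibniz, pderiv_X, Pi.single_apply, smul_eq_mul, smul_eq_mul, map_add,
        map_mul, map_mul, aeval_X]
      by_cases hij : i = j
      · subst hij
        simp only [if_true, map_one]
        ring
      · rw [if_neg (fun e => hij e), if_neg hij, map_zero]
        ring
    rw [map_mul, aeval_X, Polynomial.derivative_mul, hp, Finset.sum_mul]
    simp only [h, Finset.sum_add_distrib, Finset.sum_ite_eq, Finset.mem_univ, if_true]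

/-- A family of substitutions that is the identity on the variables at `t = 0` is the identity
on all polynomials at `t = 0`. -/
lemma coeff_zero_of_X {n : ℕ} {K : Type*} [CommRing K]
    (φ : MvPolynomial (Fin n) K →ₐ[K] Polynomial (MvPolynomial (Fin n) K))
    (h : ∀ i, (φ (X i)).coeff 0 = X i) (f : MvPolynomial (Fin n) K) : (φ f).coeff 0 = f := by
  induction f using MvPolynomial.induction_on with
  | C a => simp [← MvPolynomial.algebraMap_eq, Polynomial.algebraMap_apply]
  | add p q hp hq => simp [hp, hq]
  | mul_X p i hp => simp [Polynomial.mul_coeff_zero, hp, h]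

/-- A family of substitutions specializes at `t = 1` to the substitution of the specialized
images of the variables. -/
lemma eval_one_of_X {n : ℕ} {K : Type*} [CommRing K]
    (φ : MvPolynomial (Fin n) K →ₐ[K] Polynomial (MvPolynomial (Fin n) K))
    (F : Fin n → MvPolynomial (Fin n) K)
    (h : ∀ i, (φ (X i)).eval 1 = F i) (f : MvPolynomial (Fin n) K) :
    (φ f).eval 1 = aeval F f := by
  induction f using MvPolynomial.induction_on with
  | C a => simp [← MvPolynomial.algebraMap_eq, Polynomial.algebraMap_apply]
  | add p q hp hq => simp [hp, hq]
  | mul_X p i hp => simp [hp, h]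

/-- Multiplication by a nonzero integer can be cancelled in a `ℚ`-algebra. -/
lemma eq_zero_of_natCast_mul {R : Type*} [CommRing R] [Algebra ℚ R] {d : ℕ} (hd : d ≠ 0) {y : R}
    (h : (d : R) * y = 0) : y = 0 := by
  have h2 : algebraMap ℚ R (d : ℚ) * algebraMap ℚ R (d : ℚ)⁻¹ = 1 := by
    rw [← map_mul, mul_inv_cancel₀ (by positivity), map_one]
  have h3 : algebraMap ℚ R (d : ℚ) = (d : R) := by simp
  rw [h3] at h2
  linear_combination (-y) * h2 + algebraMap ℚ R (d : ℚ)⁻¹ * h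

/-- If a symmetric matrix `A` with `A³ = 0` satisfies `A x = d h` with `d ≠ 0`, then `A h` is
orthogonal to `h` and isotropic. -/
lemma dotProduct_eq_zero_of_cube_eq_zero {n : ℕ} {R : Type*} [CommRing R] [Algebra ℚ R]
    {d : ℕ} (hd : d ≠ 0) (A : Matrix (Fin n) (Fin n) R) (hA : A.transpose = A) (h3 : A ^ 3 = 0)
    (x h : Fin n → R) (hx : A.mulVec x = (d : R) • h) :
    h ⬝ᵥ A.mulVec h = 0 ∧ A.mulVec h ⬝ᵥ A.mulVec h = 0 := by
  have sym : ∀ v w : Fin n → R, A.mulVec v ⬝ᵥ w = v ⬝ᵥ A.mulVec w := by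
    intro v w
    rw [Matrix.dotProduct_mulVec, ← Matrix.mulVec_transpose, hA]
  have hz : A.mulVec (A.mulVec (A.mulVec x)) = 0 := by
    rw [Matrix.mulVec_mulVec, Matrix.mulVec_mulVec, ← pow_three', h3,
      Matrix.zero_mulVec]
  -- already `A² h = 0`, since `d (A² h) = A³ x`
  have hz' : A.mulVec (A.mulVec h) = 0 := by
    rw [hx, Matrix.mulVec_smul, Matrix.mulVec_smul] at hz
    funext i
    exact eq_zero_of_natCast_mul hd (congrFun hz i)
  constructor
  · apply eq_zero_of_natCast_mul hd
    rw [← smul_eq_mul, ← smul_dotProduct, ← hx, sym, hz', dotProduct_zero]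
  · rw [sym, hz', dotProduct_zero]

/-- If `∇p ⬝ ∇q = 0`, `∇q ⬝ ∇q = 0` and `∇q = (Hess p) ∇p`, then `p + t q` solves the
Hamilton-Jacobi equation, so its gradient is constant along the characteristics `X - t ∇p`, where
it equals its initial value `∇p`. -/
lemma characteristics {n : ℕ} {K : Type*} [CommRing K] [Algebra ℚ K]
    (p q : MvPolynomial (Fin n) K)
    (hq : ∀ i, pderiv i q = ∑ j, pderiv i (pderiv j p) * pderiv j p)
    (h1 : ∑ j, pderiv j p * pderiv j q = 0) (h2 : ∑ j, pderiv j q * pderiv j q = 0)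
    (φ : MvPolynomial (Fin n) K →ₐ[K] Polynomial (MvPolynomial (Fin n) K))
    (hφ : φ = aeval fun i => Polynomial.C (X i) - Polynomial.X * Polynomial.C (pderiv i p)) :
    ∀ i, φ (pderiv i p) + Polynomial.X * φ (pderiv i q) = Polynomial.C (pderiv i p) := by
  have chain : ∀ f, Polynomial.derivative (φ f) =
      - ∑ j, φ (pderiv j f) * Polynomial.C (pderiv j p) := by
    intro f
    rw [hφ, derivative_aeval]
    simp
  have zero : ∀ f, (φ f).coeff 0 = f :=
    coeff_zero_of_X φ fun i => by simp [hφ]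
  have e1 : ∀ i, ∑ j, (pderiv j (pderiv i p) * pderiv j q
      + pderiv j p * pderiv j (pderiv i q)) = 0 := by
    intro i
    have := congrArg (pderiv i) h1
    rw [map_sum, map_zero] at this
    rw [← this]
    refine Finset.sum_congr rfl fun j _ => ?_
    rw [Derivation.leibniz, pderiv_pderiv_comm i j p, pderiv_pderiv_comm i j q]
    simp only [smul_eq_mul]
    ring
  have e2 : ∀ i, ∑ j, pderiv j q * pderiv j (pderiv i q) = 0 := by
    intro i
    have := congrArg (pderiv i) h2
    rw [map_sum, map_zero] at this
    apply eq_zero_of_natCast_mul (d := 2) two_ne_zero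
    rw [← this, Finset.mul_sum]
    refine Finset.sum_congr rfl fun j _ => ?_
    rw [Derivation.leibniz, pderiv_pderiv_comm i j q]
    simp only [smul_eq_mul]
    push_cast
    ring
  intro i
  rw [← sub_eq_zero]
  refine eq_zero_of_linear_ode
    (fun i => φ (pderiv i p) + Polynomial.X * φ (pderiv i q) - Polynomial.C (pderiv i p))
    (fun i j => φ (pderiv j (pderiv i p)) + Polynomial.X * φ (pderiv j (pderiv i q))) ?_ ?_ i
  · intro i
    have a0 := congrArg φ (hq i)
    have a1 := congrArg φ (e1 i)
    have a2 := congrArg φ (e2 i)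
    simp only [map_sum, map_add, map_mul, map_zero, Finset.sum_add_distrib] at a0 a1 a2
    simp only [pderiv_pderiv_comm i _ p] at a0
    simp only [Polynomial.derivative_sub, Polynomial.derivative_add, Polynomial.derivative_mul,
      Polynomial.derivative_X, Polynomial.derivative_C, chain, one_mul, sub_zero]
    have expand : ∀ j, (φ (pderiv j (pderiv i p)) + Polynomial.X * φ (pderiv j (pderiv i q))) *
        (φ (pderiv j p) + Polynomial.X * φ (pderiv j q) - Polynomial.C (pderiv j p)) =
        φ (pderiv j (pderiv i p)) * φ (pderiv j p)
        + Polynomial.X * (φ (pderiv j (pderiv i p)) * φ (pderiv j q))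
        + Polynomial.X * (φ (pderiv j p) * φ (pderiv j (pderiv i q)))
        + Polynomial.X ^ 2 * (φ (pderiv j q) * φ (pderiv j (pderiv i q)))
        - φ (pderiv j (pderiv i p)) * Polynomial.C (pderiv j p)
        - Polynomial.X * (φ (pderiv j (pderiv i q)) * Polynomial.C (pderiv j p)) := by
      intro j
      ring
    simp only [expand, Finset.sum_add_distrib, Finset.sum_sub_distrib, ← Finset.mul_sum]
    linear_combination a0 - Polynomial.X * a1 - Polynomial.X ^ 2 * a2
  · intro i
    simp [zero, Polynomial.mul_coeff_zero]

/-- Symmetric cube-zero case: if `P` is homogeneous of degree `d+1`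
(`d ≥ 2`) with `(Hess P)³ = 0`, then `F = X - ∇P` has polynomial inverse
`Gᵢ = Xᵢ + DᵢP + Dᵢ((1/2) ∑ⱼ (DⱼP)²)`, and `deg Gᵢ ≤ 2d - 1`. -/
theorem symmetric_cube_zero_case {n : ℕ} {K : Type*} [CommRing K] [Algebra ℚ K]
    (d : ℕ) (hd : 2 ≤ d) (P : MvPolynomial (Fin n) K)
    (hP : P.IsHomogeneous (d + 1)) (hnil : hessian P ^ 3 = 0)
    (F G : Fin n → MvPolynomial (Fin n) K)
    (hF : ∀ i, F i = X i - pderiv i P)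
    (hG : ∀ i, G i = X i + pderiv i P +
      pderiv i (((1 : ℚ) / 2) • ∑ j : Fin n, pderiv j P ^ 2)) :
    ((∀ i, aeval G (F i) = X i) ∧ (∀ i, aeval F (G i) = X i)) ∧
      (∀ i, (G i).totalDegree ≤ 2 * d - 1) := by
  set q : MvPolynomial (Fin n) K := ((1 : ℚ) / 2) • ∑ j : Fin n, pderiv j P ^ 2 with hqdef
  have hH : ∀ i, (pderiv i P).IsHomogeneous d := fun i => by simpa using hP.pderiv (i := i)
  have hq : ∀ i, pderiv i q = ∑ j, pderiv i (pderiv j P) * pderiv j P := by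
    intro i
    have h2 : (2 : MvPolynomial (Fin n) K) * q = ∑ j : Fin n, pderiv j P ^ 2 := by
      rw [two_mul, hqdef, ← add_smul]
      norm_num
    have h3 := congrArg (pderiv i) h2
    rw [two_mul, map_add, map_sum] at h3
    rw [← sub_eq_zero]
    apply eq_zero_of_natCast_mul (d := 2) two_ne_zero
    have h4 : ∑ j, pderiv i (pderiv j P ^ 2) =
        2 * ∑ j, pderiv i (pderiv j P) * pderiv j P := by
      rw [Finset.mul_sum]
      refine Finset.sum_congr rfl fun j _ => ?_
      rw [pow_two, Derivation.leibniz, smul_eq_mul]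
      ring
    rw [h4] at h3
    push_cast
    linear_combination h3
  have hB : (hessian P).mulVec (fun j => pderiv j P) = fun i => pderiv i q := by
    funext i
    rw [hq]
    rfl
  have hsymm : (hessian P).transpose = hessian P := by
    ext1 i j
    exact pderiv_pderiv_comm j i P
  have hEuler : (hessian P).mulVec X =
      (d : MvPolynomial (Fin n) K) • fun j => pderiv j P := by
    funext i
    have := (hH i).sum_X_mul_pderiv
    simp only [nsmul_eq_mul] at this
    simp only [Pi.smul_apply, smul_eq_mul]
    rw [← this, Matrix.mulVec, dotProduct]
    refine Finset.sum_congr rfl fun j _ => ?_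
    rw [mul_comm, pderiv_pderiv_comm j i P, hessian, Matrix.of_apply]
  obtain ⟨h1, h2⟩ := dotProduct_eq_zero_of_cube_eq_zero (by omega : d ≠ 0) (hessian P) hsymm hnil
    X (fun j => pderiv j P) hEuler
  rw [hB] at h1 h2
  obtain ⟨φ, hφ⟩ : ∃ φ : MvPolynomial (Fin n) K →ₐ[K] Polynomial (MvPolynomial (Fin n) K),
    φ = aeval fun i => Polynomial.C (X i) - Polynomial.X * Polynomial.C (pderiv i P) := ⟨_, rfl⟩
  obtain ⟨ψ, hψ⟩ : ∃ ψ : MvPolynomial (Fin n) K →ₐ[K] Polynomial (MvPolynomial (Fin n) K),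
    ψ = aeval fun i => Polynomial.C (X i) + Polynomial.X * Polynomial.C (pderiv i P)
      + Polynomial.X ^ 2 * Polynomial.C (pderiv i q) := ⟨_, rfl⟩
  have hchar := characteristics P q hq h1 h2 φ hφ
  have φX : ∀ i, φ (X i) = Polynomial.C (X i) - Polynomial.X * Polynomial.C (pderiv i P) := by
    simp [hφ]
  have φ0 : ∀ f, (φ f).coeff 0 = f :=
    coeff_zero_of_X φ fun i => by simp [hφ]
  -- specialization at `t = 1` turns `φ` and `ψ` into substitution of `F` and `G`
  have φ1 : ∀ f, (φ f).eval 1 = aeval F f :=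
    eval_one_of_X φ F fun i => by simp [hφ, hF]
  have ψ1 : ∀ f, (ψ f).eval 1 = aeval G f :=
    eval_one_of_X ψ G fun i => by simp [hψ, hG]
  let Φ := Polynomial.eval₂RingHom φ.toRingHom Polynomial.X
  let Ψ := Polynomial.eval₂RingHom ψ.toRingHom Polynomial.X
  have ΦC : ∀ f, Φ (Polynomial.C f) = φ f := fun f => by simp [Φ]
  have ΨC : ∀ f, Ψ (Polynomial.C f) = ψ f := fun f => by simp [Ψ]
  have ΦX : Φ Polynomial.X = Polynomial.X := by simp [Φ]
  have ΨX : Ψ Polynomial.X = Polynomial.X := by simp [Ψ]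
  have Φinj : Function.Injective Φ := eval₂RingHom_injective _ φ0
  have hΦψ : ∀ f, Φ (ψ f) = Polynomial.C f := by
    intro f
    induction f using MvPolynomial.induction_on with
    | C a =>
      rw [← MvPolynomial.algebraMap_eq, ψ.commutes, Polynomial.algebraMap_apply, ΦC,
        MvPolynomial.algebraMap_eq, ← MvPolynomial.algebraMap_eq, φ.commutes,
        Polynomial.algebraMap_apply]
    | add p q hp hq => simp [hp, hq]
    | mul_X p i hp =>
      have : Φ (ψ (X i)) = Polynomial.C (X i) := by
        rw [hψ, aeval_X]
        simp only [map_add, map_mul, map_pow, ΦC, ΦX, φX]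
        linear_combination Polynomial.X * hchar i
      simp [hp, this]
  have hΨφ : ∀ i, Ψ (φ (X i)) = Polynomial.C (X i) := by
    intro i
    apply Φinj
    rw [ΦC, φX, map_sub, map_mul, ΨC, ΨC, ΨX, map_sub, map_mul, ΦX, hΦψ, hΦψ]
  refine ⟨⟨fun i => ?_, fun i => ?_⟩, fun i => ?_⟩
  · have := congrArg (Polynomial.eval 1) (hΨφ i)
    rw [φX, map_sub, map_mul, ΨC, ΨC, ΨX] at this
    simpa [ψ1, hF] using this
  · have := congrArg (Polynomial.eval 1) (hchar i)
    simp only [Polynomial.eval_add, Polynomial.eval_mul, Polynomial.eval_X, Polynomial.eval_C,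
      φ1, one_mul] at this
    rw [hG, map_add, map_add, aeval_X, hF]
    linear_combination this
  · have hBdeg : (pderiv i q).IsHomogeneous (d - 1 + d) := by
      rw [hq]
      exact IsHomogeneous.sum _ _ _ fun j _ => ((hH j).pderiv).mul (hH j)
    rw [hG]
    refine (totalDegree_add _ _).trans (max_le ((totalDegree_add _ _).trans (max_le ?_ ?_)) ?_)
    · exact ((isHomogeneous_X K i).totalDegree_le).trans (by omega)
    · exact ((hH i).totalDegree_le).trans (by omega)
    · exact (hBdeg.totalDegree_le).trans (by omega)
end

section
/- Let K be a commutative ℚ-algebra, d ≥ 2, and P ∈ K[X₁,…,Xₙ] homogeneous of degree d+1 with (Hess P)³ = 0. Let Q⁽¹⁾, Q⁽²⁾, … be the Zhao sequence of P. Then Q⁽ᵐ⁾ = 0 for every m ≥ 3. -/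
/-!
Write `v = ∇P` and `H = Hess P`. Each `DᵢP` is homogeneous of degree `d`, so Euler's identity gives
`H x = d v`, whence `d H² v = H³ x = 0` and `H² v = 0` because `d` is invertible in `K`.
Since `Q⁽²⁾ = v ⬝ v / 2`, its gradient is `H v`. Hence `Q⁽³⁾` is a multiple of `v ⬝ H v`, and
`d (v ⬝ H v) = H x ⬝ H v = x ⬝ H² v = 0`; likewise `Q⁽⁴⁾` is a multiple of
`H v ⬝ H v = v ⬝ H² v = 0` once `Q⁽³⁾ = 0`. For `m ≥ 5` every pair `k + ℓ = m` has a member `≥ 3`,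
so all later terms vanish by strong induction.
-/

open MvPolynomial

/-- The Zhao sequence of `P`: `Q⁽¹⁾ = P` and for `m ≥ 2`,
`Q⁽ᵐ⁾ = (1/(2(m-1))) ∑_{k+ℓ=m, k,ℓ≥1} ∇Q⁽ᵏ⁾ ⬝ ∇Q⁽ˡ⁾`. -/
noncomputable def zhaoSeq {n : ℕ} {K : Type*} [CommRing K] [Algebra ℚ K]
    (P : MvPolynomial (Fin n) K) : ℕ → MvPolynomial (Fin n) K
  | 0 => 0
  | 1 => P
  | m + 2 =>
      ((1 : ℚ) / (2 * (m + 1))) •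
        ∑ k ∈ (Finset.Icc 1 (m + 1)).attach,
          ∑ i : Fin n,
            MvPolynomial.pderiv i (zhaoSeq P k.1) *
              MvPolynomial.pderiv i (zhaoSeq P (m + 2 - k.1))
  decreasing_by
  · exact Nat.lt_succ_of_le (Finset.mem_Icc.mp k.2).2
  · have := (Finset.mem_Icc.mp k.2).1
    omega

open Matrix

/-- The gradient `(D₁P, …, DₙP)`. -/
noncomputable def grad {n : ℕ} {K : Type*} [CommRing K]
    (P : MvPolynomial (Fin n) K) : Fin n → MvPolynomial (Fin n) K :=
  fun i => pderiv i P

lemma grad_zero {n : ℕ} {K : Type*} [CommRing K] :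
    grad (0 : MvPolynomial (Fin n) K) = 0 := by
  funext i; simp [grad]

lemma hessian_transpose {n : ℕ} {K : Type*} [CommRing K] (P : MvPolynomial (Fin n) K) :
    (hessian P)ᵀ = hessian P := by
  ext1 i j
  -- The commutator of two derivations is a derivation, and it kills every variable.
  have h : ⁅(pderiv j : Derivation K (MvPolynomial (Fin n) K) (MvPolynomial (Fin n) K)),
      (pderiv i : Derivation K (MvPolynomial (Fin n) K) (MvPolynomial (Fin n) K))⁆ = 0 := by
    refine derivation_ext fun k => ?_
    classical
    simp [Derivation.commutator_apply, pderiv_X, Pi.single_apply, apply_ite]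
  have h' := DFunLike.congr_fun h P
  simpa [hessian, Derivation.commutator_apply, sub_eq_zero] using h'

lemma hessian_dotProduct_comm {n : ℕ} {K : Type*} [CommRing K] (P : MvPolynomial (Fin n) K)
    (u w : Fin n → MvPolynomial (Fin n) K) :
    (hessian P *ᵥ u) ⬝ᵥ w = u ⬝ᵥ (hessian P *ᵥ w) := by
  rw [dotProduct_mulVec, ← mulVec_transpose, hessian_transpose]

/-- Euler's identity for the partial derivatives of a homogeneous polynomial. -/
lemma hessian_mulVec_X {n : ℕ} {K : Type*} [CommRing K] {d : ℕ} {P : MvPolynomial (Fin n) K}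
    (hP : P.IsHomogeneous (d + 1)) :
    hessian P *ᵥ X = d • grad P := by
  funext i
  have h := (hP.pderiv (i := i)).sum_X_mul_pderiv
  rw [Nat.add_sub_cancel] at h
  rw [← hessian_transpose]
  simpa [mulVec, dotProduct, hessian, grad, mul_comm] using h

lemma grad_dotProduct_self {n : ℕ} {K : Type*} [CommRing K] (P : MvPolynomial (Fin n) K) :
    grad (grad P ⬝ᵥ grad P) = 2 • (hessian P *ᵥ grad P) := by
  funext i
  simp only [grad, dotProduct, map_sum, Derivation.leibniz, smul_eq_mul, Pi.smul_apply, mulVec,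
    hessian, of_apply, Finset.smul_sum]
  exact Finset.sum_congr rfl fun j _ => by ring

lemma zhaoSeq_add_two {n : ℕ} {K : Type*} [CommRing K] [Algebra ℚ K]
    (P : MvPolynomial (Fin n) K) (m : ℕ) :
    zhaoSeq P (m + 2) = ((1 : ℚ) / (2 * (m + 1))) •
      ∑ k ∈ Finset.Icc 1 (m + 1), grad (zhaoSeq P k) ⬝ᵥ grad (zhaoSeq P (m + 2 - k)) := by
  rw [zhaoSeq]
  congr 1
  exact Finset.sum_attach (Finset.Icc 1 (m + 1))
    (fun k => grad (zhaoSeq P k) ⬝ᵥ grad (zhaoSeq P (m + 2 - k)))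

lemma zhaoSeq_one {n : ℕ} {K : Type*} [CommRing K] [Algebra ℚ K]
    (P : MvPolynomial (Fin n) K) : zhaoSeq P 1 = P := by
  rw [zhaoSeq]

lemma grad_zhaoSeq_two {n : ℕ} {K : Type*} [CommRing K] [Algebra ℚ K]
    (P : MvPolynomial (Fin n) K) : grad (zhaoSeq P 2) = hessian P *ᵥ grad P := by
  have h2 : zhaoSeq P 2 = (1 / 2 : ℚ) • (grad P ⬝ᵥ grad P) := by
    have := zhaoSeq_add_two P 0
    simpa [zhaoSeq_one] using this
  have h : grad (zhaoSeq P 2) = (1 / 2 : ℚ) • grad (grad P ⬝ᵥ grad P) := by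
    funext i
    rw [h2]
    exact map_rat_smul (pderiv i : Derivation K _ _) _ _
  rw [h, grad_dotProduct_self, ← Nat.cast_smul_eq_nsmul ℚ, smul_smul]
  norm_num

/-- if `P` is homogeneous of degree `d+1` (`d ≥ 2`) with
`(Hess P)³ = 0`, then `Q⁽ᵐ⁾ = 0` for all `m ≥ 3`. -/
theorem zhaoSeq_eq_zero_of_hessian_cube_zero {n : ℕ} {K : Type*} [CommRing K] [Algebra ℚ K]
    (d : ℕ) (hd : 2 ≤ d) (P : MvPolynomial (Fin n) K)
    (hP : P.IsHomogeneous (d + 1)) (hnil : hessian P ^ 3 = 0) :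
    ∀ m : ℕ, 3 ≤ m → zhaoSeq P m = 0 := by
  have hd0 : (d : ℚ) ≠ 0 := by
    have : d ≠ 0 := by omega
    exact_mod_cast this
  have hE := hessian_mulVec_X hP
  rw [← Nat.cast_smul_eq_nsmul ℚ] at hE
  have hv : grad P = (d : ℚ)⁻¹ • (hessian P *ᵥ X) := by
    rw [hE, smul_smul, inv_mul_cancel₀ hd0, one_smul]
  have hHHv : hessian P *ᵥ (hessian P *ᵥ grad P) = 0 := by
    rw [hv, mulVec_smul, mulVec_smul, mulVec_mulVec, mulVec_mulVec, ← pow_three',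
      hnil, zero_mulVec, smul_zero]
  have hvHv : grad P ⬝ᵥ (hessian P *ᵥ grad P) = 0 := by
    conv_lhs => rw [hv, smul_dotProduct, ← hv]
    rw [hessian_dotProduct_comm, hHHv, dotProduct_zero, smul_zero]
  have hHvHv : (hessian P *ᵥ grad P) ⬝ᵥ (hessian P *ᵥ grad P) = 0 := by
    rw [hessian_dotProduct_comm, hHHv, dotProduct_zero]
  intro m
  induction m using Nat.strong_induction_on with
  | _ m ih =>
    intro hm
    obtain ⟨m, rfl⟩ : ∃ r, m = r + 2 := ⟨m - 2, by omega⟩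
    rw [zhaoSeq_add_two, Finset.sum_eq_zero, smul_zero]
    intro k hk
    rw [Finset.mem_Icc] at hk
    by_cases h1 : 3 ≤ k
    · rw [ih k (by omega) h1, grad_zero, zero_dotProduct]
    by_cases h2 : 3 ≤ m + 2 - k
    · rw [ih _ (by omega) h2, grad_zero, dotProduct_zero]
    -- The remaining pairs `(k, ℓ)` are `(1, 2)`, `(2, 1)` and `(2, 2)`.
    obtain ⟨rfl, h⟩ | ⟨rfl, h⟩ | ⟨rfl, h⟩ : (k = 1 ∧ m + 2 - k = 2) ∨ (k = 2 ∧ m + 2 - k = 1) ∨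
        (k = 2 ∧ m + 2 - k = 2) := by omega
    · rw [h, zhaoSeq_one, grad_zhaoSeq_two, hvHv]
    · rw [h, zhaoSeq_one, grad_zhaoSeq_two, dotProduct_comm, hvHv]
    · rw [h, grad_zhaoSeq_two, hHvHv]
end

section
/- Fix n ≥ 1 and take d = 2. Let σ be the set of multi-indices q ∈ ℕⁿ with |q| = 3, let R = ℚ[c_q : q ∈ σ], and let P = Σ_{q∈σ} c_q X^q ∈ R[X₁,…,Xₙ] be the generic homogeneous cubic polynomial. Let I be the ideal of R generated by all coefficients (elements of R) of all entries of the matrix (Hess P)⁴, and let Q⁽¹⁾, Q⁽²⁾, … be the Zhao sequence of P over K = R. Then for every m ≥ 5, every coefficient of Q⁽ᵐ⁾ lies in I. -/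
/-!
Over the quotient of the coefficient ring by `I` the Hessian of the cubic form `P` satisfies
`(Hess P)⁴ = 0`, so it suffices to show that then `Q⁽ᵐ⁾ = 0` for `m ≥ 5`. Since `Q⁽ᵐ⁾` is a sum of
products of gradients of `Q⁽ᵏ⁾` and `Q⁽ˡ⁾` with `k + l = m`, an induction reduces this to the four
cases `5 ≤ m ≤ 8` (`zhaoSeq_eq_zero`).

The third derivatives of `P` are constants, and they turn vector fields into a commutative algebra
(`cubicMul`) whose multiplication operators `L_v` are self-adjoint for the dot product. For the
tautological vector field `x = X`, `L_x = Hess P`, so `L_x⁴ = 0`, while `∇P = x² / 2`.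
With `x³ = x x²`, `x⁴ = x x³` and `z = x² x²`, where juxtaposition is this product, one finds
`∇Q⁽²⁾ = x³ / 2`, `∇Q⁽³⁾ = x⁴ / 2 + z / 8` and, because `x³ ⬝ x³ = x² ⬝ x⁴ = x ⬝ L_x⁴ x = 0`,
`Q⁽⁴⁾ = x² ⬝ z / 48` with `∇Q⁽⁴⁾ = x z / 8`. Hence only a few dot products of such monomials have to
vanish. They do because a polynomial that vanishes has vanishing directional derivatives along every
polynomial vector field `y`, and differentiating turns each vanishing dot product into a vanishing
vector of lower degree:

* `x³ ⬝ x³ = 0` gives `x² x³ = 0`, hence `x³ ⬝ z = 0`, which gives `x² z + 2 x (x z) = 0`;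
* differentiating `L_x⁴ x²` along `x²` gives `x⁴ ⬝ z = 0`, and then `z ⬝ z = 0`;
* differentiating `z ⬝ z` and `x⁴ ⬝ z` gives `z ⬝ x z = 0`;
* differentiating `z ⬝ x z` gives `x² ⬝ z z = 0`, hence `x z ⬝ x z = 0`.
-/

open MvPolynomial

noncomputable section

namespace ZhaoCubic

/-! ### The commutative algebra attached to a cubic form -/

section General

variable {n : ℕ} {K : Type*} [CommRing K]

/-- The gradient of a polynomial, as a tuple of polynomials. -/
def grad (f : MvPolynomial (Fin n) K) : Fin n → MvPolynomial (Fin n) K :=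
  fun i => pderiv i f

/-- The directional derivative `∑ yᵢ Dᵢ` along a polynomial vector field `y`. -/
def dirDeriv (y : Fin n → MvPolynomial (Fin n) K) :
    Derivation K (MvPolynomial (Fin n) K) (MvPolynomial (Fin n) K) :=
  mkDerivation K y

/-- The directional derivative along `y`, applied to each component of a vector field. -/
def vecDeriv (y u : Fin n → MvPolynomial (Fin n) K) : Fin n → MvPolynomial (Fin n) K :=
  fun i => dirDeriv y (u i)

lemma dirDeriv_eq_dotProduct_grad (y : Fin n → MvPolynomial (Fin n) K)
    (f : MvPolynomial (Fin n) K) : dirDeriv y f = y ⬝ᵥ grad f := by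
  have hsum (g : MvPolynomial (Fin n) K) :
      (∑ i, y i • (pderiv i : Derivation K (MvPolynomial (Fin n) K) _)) g
        = ∑ i, (y i • (pderiv i : Derivation K (MvPolynomial (Fin n) K) _)) g := by
    change Derivation.coeFnAddMonoidHom _ g = _
    rw [map_sum, Finset.sum_apply]
    rfl
  have h : dirDeriv y = ∑ i, y i • (pderiv i : Derivation K (MvPolynomial (Fin n) K) _) := by
    refine derivation_ext fun j => ?_
    rw [hsum]
    simp [dirDeriv, mkDerivation_X, pderiv_X, Pi.single_apply]
  rw [h, hsum]
  simp [dotProduct, grad]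

lemma pderiv_comm (i j : Fin n) (f : MvPolynomial (Fin n) K) :
    pderiv i (pderiv j f) = pderiv j (pderiv i f) := by
  have h : ⁅(pderiv i : Derivation K (MvPolynomial (Fin n) K) (MvPolynomial (Fin n) K)),
      (pderiv j : Derivation K (MvPolynomial (Fin n) K) (MvPolynomial (Fin n) K))⁆ = 0 := by
    refine derivation_ext fun k => ?_
    rw [Derivation.commutator_apply, pderiv_X, pderiv_X]
    simp only [Pi.single_apply]
    split_ifs <;> simp
  have h' := DFunLike.congr_fun h f
  simpa [Derivation.commutator_apply, sub_eq_zero] using h'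

lemma dirDeriv_dotProduct (y u v : Fin n → MvPolynomial (Fin n) K) :
    dirDeriv y (u ⬝ᵥ v) = vecDeriv y u ⬝ᵥ v + u ⬝ᵥ vecDeriv y v := by
  simp only [dotProduct, map_sum, Derivation.leibniz, ← Finset.sum_add_distrib, vecDeriv,
    smul_eq_mul]
  exact Finset.sum_congr rfl fun i _ => by ring

lemma vecDeriv_X (y : Fin n → MvPolynomial (Fin n) K) : vecDeriv y X = y :=
  funext fun i => mkDerivation_X K y i

lemma vecDeriv_zero (y : Fin n → MvPolynomial (Fin n) K) : vecDeriv y 0 = 0 :=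
  funext fun _ => map_zero _

/-- The commutative product on vector fields whose structure constants are the third partial
derivatives of `P`: `u * v = D³P(u, v, ·)`. -/
def cubicMul (P : MvPolynomial (Fin n) K) (u v : Fin n → MvPolynomial (Fin n) K) :
    Fin n → MvPolynomial (Fin n) K :=
  fun i => ∑ j, ∑ k, pderiv i (pderiv j (pderiv k P)) * u j * v k

variable (P : MvPolynomial (Fin n) K)

lemma cubicMul_comm (u v : Fin n → MvPolynomial (Fin n) K) :
    cubicMul P u v = cubicMul P v u := by
  funext i
  unfold cubicMul
  rw [Finset.sum_comm]
  refine Finset.sum_congr rfl fun j _ => Finset.sum_congr rfl fun k _ => ?_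
  rw [pderiv_comm k j]
  ring

lemma cubicMul_add (u v w : Fin n → MvPolynomial (Fin n) K) :
    cubicMul P u (v + w) = cubicMul P u v + cubicMul P u w := by
  funext i
  simp only [cubicMul, Pi.add_apply, mul_add, Finset.sum_add_distrib]

lemma cubicMul_zero (u : Fin n → MvPolynomial (Fin n) K) : cubicMul P u 0 = 0 := by
  funext i
  simp [cubicMul]

/-- Multiplication by `v` is self-adjoint for the dot product. -/
lemma dotProduct_cubicMul (u v w : Fin n → MvPolynomial (Fin n) K) :
    u ⬝ᵥ cubicMul P v w = cubicMul P v u ⬝ᵥ w := by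
  simp only [dotProduct, cubicMul, Finset.mul_sum, Finset.sum_mul]
  have h1 : ∀ i : Fin n, ∑ j, ∑ k, u i * (pderiv i (pderiv j (pderiv k P)) * v j * w k)
      = ∑ k, ∑ j, u i * (pderiv i (pderiv j (pderiv k P)) * v j * w k) :=
    fun i => Finset.sum_comm
  simp only [h1]
  rw [Finset.sum_comm]
  refine Finset.sum_congr rfl fun k _ => ?_
  rw [Finset.sum_comm]
  refine Finset.sum_congr rfl fun j _ => Finset.sum_congr rfl fun i _ => ?_
  rw [pderiv_comm j k, pderiv_comm i k, pderiv_comm i j]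
  ring

variable {P} (hP : P.IsHomogeneous 3)
include hP

lemma vecDeriv_cubicMul (y u v : Fin n → MvPolynomial (Fin n) K) :
    vecDeriv y (cubicMul P u v) = cubicMul P (vecDeriv y u) v + cubicMul P u (vecDeriv y v) := by
  funext i
  simp only [cubicMul, vecDeriv, map_sum, Pi.add_apply, ← Finset.sum_add_distrib]
  refine Finset.sum_congr rfl fun j _ => Finset.sum_congr rfl fun k _ => ?_
  -- third partial derivatives of a cubic form are constants, hence killed by every derivation
  have h0 : (pderiv i (pderiv j (pderiv k P))).IsHomogeneous 0 := hP.pderiv.pderiv.pderiv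
  rw [← totalDegree_zero_iff_isHomogeneous, totalDegree_eq_zero_iff_eq_C] at h0
  rw [h0]
  simp only [Derivation.leibniz, smul_eq_mul, derivation_C]
  ring

/-- Multiplication by the tautological vector field `X` is the Hessian, by Euler's identity for the
second partial derivatives. -/
lemma cubicMul_X (v : Fin n → MvPolynomial (Fin n) K) :
    cubicMul P X v = (hessian P).mulVec v := by
  funext i
  simp only [cubicMul, Matrix.mulVec, dotProduct, hessian, Matrix.of_apply]
  rw [Finset.sum_comm]
  refine Finset.sum_congr rfl fun k _ => ?_
  have h := (hP.pderiv (i := k)).pderiv (i := i) |>.sum_X_mul_pderiv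
  simp only [Nat.reduceSub, one_smul] at h
  rw [← h, Finset.sum_mul]
  refine Finset.sum_congr rfl fun j _ => ?_
  rw [pderiv_comm i j]
  ring

/-- Euler's identity for the first partial derivatives: `x² = 2 ∇P`. -/
lemma cubicMul_X_X : cubicMul P X X = (2 : ℕ) • grad P := by
  rw [cubicMul_X hP]
  funext i
  have h := (hP.pderiv (i := i)).sum_X_mul_pderiv
  simp only [Nat.reduceSub] at h
  simp only [Matrix.mulVec, dotProduct, hessian, Matrix.of_apply, Pi.smul_apply, grad]
  rw [← h]
  refine Finset.sum_congr rfl fun j _ => ?_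
  rw [pderiv_comm i j]
  ring

lemma cubicMul_X_four (hH : hessian P ^ 4 = 0) (v : Fin n → MvPolynomial (Fin n) K) :
    cubicMul P X (cubicMul P X (cubicMul P X (cubicMul P X v))) = 0 := by
  simp only [cubicMul_X hP, Matrix.mulVec_mulVec]
  rw [show hessian P * (hessian P * (hessian P * hessian P)) = hessian P ^ 4 by noncomm_ring, hH,
    Matrix.zero_mulVec]

end General

/-! ### Vanishing of the Zhao sequence -/

section Rational

variable {n : ℕ} {K : Type*} [CommRing K] [Algebra ℚ K]

omit [Algebra ℚ K] in
lemma eq_zero_of_dotProduct (w : Fin n → MvPolynomial (Fin n) K) (h : ∀ y, y ⬝ᵥ w = 0) :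
    w = 0 :=
  funext fun i => by simpa using h (Pi.single i 1)

lemma eq_zero_of_rat_smul {V : Type*} [AddCommGroup V] [Module ℚ V] {c : ℚ} (hc : c ≠ 0) {a : V}
    (h : c • a = 0) : a = 0 := by
  rw [← one_smul ℚ a, ← inv_mul_cancel₀ hc, mul_smul, h, smul_zero]

omit [Algebra ℚ K] in
lemma grad_eq {f : MvPolynomial (Fin n) K} {w : Fin n → MvPolynomial (Fin n) K}
    (h : ∀ y, dirDeriv y f = y ⬝ᵥ w) : grad f = w :=
  sub_eq_zero.mp <| eq_zero_of_dotProduct _ fun y => by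
    rw [dotProduct_sub, ← dirDeriv_eq_dotProduct_grad, h, sub_self]

/-- The recursion of the Zhao sequence, with the convolution indexed from `0`. -/
lemma zhaoSeq_add_two (P : MvPolynomial (Fin n) K) (m : ℕ) :
    zhaoSeq P (m + 2) = ((1 : ℚ) / (2 * (m + 1))) •
      ∑ k ∈ Finset.range (m + 1), grad (zhaoSeq P (1 + k)) ⬝ᵥ grad (zhaoSeq P (m + 1 - k)) := by
  have h : ∑ k ∈ Finset.Icc 1 (m + 1), grad (zhaoSeq P k) ⬝ᵥ grad (zhaoSeq P (m + 2 - k))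
      = ∑ k ∈ Finset.range (m + 1), grad (zhaoSeq P (1 + k)) ⬝ᵥ grad (zhaoSeq P (m + 1 - k)) := by
    rw [← Finset.Ico_add_one_right_eq_Icc, Finset.sum_Ico_eq_sum_range]
    refine Finset.sum_congr (by simp) fun k _ => ?_
    rw [show m + 2 - (1 + k) = m + 1 - k by lia]
  rw [zhaoSeq, ← h, ← Finset.sum_attach (Finset.Icc 1 (m + 1))]
  rfl

omit [Algebra ℚ K] in
lemma grad_zero : grad (0 : MvPolynomial (Fin n) K) = 0 :=
  funext fun _ => map_zero _

variable {P : MvPolynomial (Fin n) K}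

/-- The base cases of the vanishing. In the proof `S` is the product `cubicMul P`, and `f3`, `f4`,
`f5`, `f6`, `f8` are the relations obtained by differentiating a vanishing dot product along `y`;
self-adjointness is used to bring `y` to the left of the dot product. -/
lemma zhaoSeq_small (hP : P.IsHomogeneous 3) (hH : hessian P ^ 4 = 0) :
    zhaoSeq P 5 = 0 ∧ zhaoSeq P 6 = 0 ∧ zhaoSeq P 7 = 0 ∧ zhaoSeq P 8 = 0 := by
  obtain ⟨S, hS⟩ : ∃ S, S = cubicMul P := ⟨_, rfl⟩
  obtain ⟨x, hx⟩ : ∃ x : Fin n → MvPolynomial (Fin n) K, x = X := ⟨_, rfl⟩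
  have comm (u v) : S u v = S v u := hS ▸ cubicMul_comm P u v
  have Sadd (u v w) : S u (v + w) = S u v + S u w := hS ▸ cubicMul_add P u v w
  have Szero (u) : S u 0 = 0 := hS ▸ cubicMul_zero P u
  have adj (u v w) : S v u ⬝ᵥ w = u ⬝ᵥ S v w := hS ▸ (dotProduct_cubicMul P u v w).symm
  have h4 (v) : S x (S x (S x (S x v))) = 0 := by
    rw [hS, hx]
    exact cubicMul_X_four hP hH v
  have dS (y u v) : vecDeriv y (S u v) = S v (vecDeriv y u) + S u (vecDeriv y v) := by
    rw [comm v, hS]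
    exact vecDeriv_cubicMul hP y u v
  have dx (y) : vecDeriv y x = y := hx ▸ vecDeriv_X y
  have dd (y) (u v : Fin n → MvPolynomial (Fin n) K) :
      dirDeriv y (u ⬝ᵥ v) = vecDeriv y u ⬝ᵥ v + vecDeriv y v ⬝ᵥ u := by
    rw [dirDeriv_dotProduct, dotProduct_comm u]
  have half {a b : MvPolynomial (Fin n) K} {c : ℚ} (hc : c ≠ 0) (h : c • a = b) (hb : b = 0) :
      a = 0 := eq_zero_of_rat_smul hc (h.trans hb)
  have gradP : grad P = (1 / 2 : ℚ) • S x x := by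
    rw [hS, hx, cubicMul_X_X hP]
    module
  clear hS hx
  obtain ⟨x₂, hx₂⟩ : ∃ v, v = S x x := ⟨_, rfl⟩
  obtain ⟨x₃, hx₃⟩ : ∃ v, v = S x x₂ := ⟨_, rfl⟩
  obtain ⟨x₄, hx₄⟩ : ∃ v, v = S x x₃ := ⟨_, rfl⟩
  obtain ⟨z, hz⟩ : ∃ v, v = S x₂ x₂ := ⟨_, rfl⟩
  have hx₅ : S x x₄ = 0 := by rw [hx₄, hx₃, hx₂, h4]
  have dx₂ (y) : vecDeriv y x₂ = S x y + S x y := by rw [hx₂, dS, dx]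
  have dx₃ (y) : vecDeriv y x₃ = S x₂ y + (S x (S x y) + S x (S x y)) := by
    rw [hx₃, dS, dx, dx₂, Sadd]
  have dx₄ (y) : vecDeriv y x₄
      = S x₃ y + (S x (S x₂ y) + (S x (S x (S x y)) + S x (S x (S x y)))) := by
    rw [hx₄, dS, dx, dx₃, Sadd, Sadd]
  have dz (y) : vecDeriv y z = (S x₂ (S x y) + S x₂ (S x y)) + (S x₂ (S x y) + S x₂ (S x y)) := by
    rw [hz, dS, dx₂, Sadd]
  have h33 : x₃ ⬝ᵥ x₃ = 0 := by
    nth_rw 1 [hx₃]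
    rw [adj, ← hx₄, hx₂, adj, hx₅, dotProduct_zero]
  have h23 : S x₂ x₃ = 0 := by
    refine eq_zero_of_dotProduct _ fun y => half (c := 2) two_ne_zero ?_
      ((congrArg (dirDeriv y) h33).trans (map_zero _))
    simp only [dd, dx₃, add_dotProduct, adj, ← hx₄, hx₅, dotProduct_zero]
    module
  have h3z : x₃ ⬝ᵥ z = 0 := by rw [hz, ← adj, h23, zero_dotProduct]
  have f3 (y) : y ⬝ᵥ S x₂ z + (y ⬝ᵥ S x (S x z) + y ⬝ᵥ S x (S x z)) = 0 := by
    refine Eq.trans ?_ ((congrArg (dirDeriv y) h3z).trans (map_zero _))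
    simp only [dd, dx₃, dz, add_dotProduct, adj, h23, Szero, dotProduct_zero]
    module
  have h4z : x₄ ⬝ᵥ z = 0 := by
    -- `lin` is the linearization of `L_x ^ 4 = 0`; it is used in the direction `x²`, at `x²`
    have lin (y v) : S (S x (S x (S x v))) y + S x (S (S x (S x v)) y + S x (S (S x v) y +
        S x (S v y))) = 0 := by
      have e := congrArg (vecDeriv y) (h4 v)
      simp only [dS, dx, vecDeriv_zero, Sadd] at e
      simpa only [h4, Sadd, add_zero, add_assoc] using e
    have e := lin x₂ x₂
    rw [← hx₃, ← hx₄, hx₅, comm x₃ x₂, h23, comm 0, Szero, zero_add, zero_add, ← hz, comm x₄,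
      Sadd] at e
    have e' := congrArg (x ⬝ᵥ ·) e
    simp only [dotProduct_add, dotProduct_zero, ← adj, ← hx₂, ← hx₃, ← hx₄, ← hz] at e'
    refine half (c := 2) two_ne_zero ?_ e'
    rw [dotProduct_comm z x₄]
    module
  have hzz : z ⬝ᵥ z = 0 := by
    have e := f3 x₂
    simpa only [← adj, ← hz, ← hx₃, ← hx₄, h4z, add_zero] using e
  have f4 (y) : y ⬝ᵥ S x (S x₂ z) = 0 := by
    refine half (c := 8) (by norm_num) ?_ ((congrArg (dirDeriv y) hzz).trans (map_zero _))
    simp only [dd, dz, add_dotProduct, adj]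
    module
  have f5 (y) : y ⬝ᵥ S x (S x (S x z)) = 0 := by
    refine half (c := 2) two_ne_zero ?_ (f3 (S x y))
    simp only [adj, f4]
    module
  have f6 (y) : y ⬝ᵥ S x₃ z + y ⬝ᵥ S x₂ (S x z) + (4 : ℚ) • (y ⬝ᵥ S x (S x₂ x₄)) = 0 := by
    refine Eq.trans ?_ ((congrArg (dirDeriv y) h4z).trans (map_zero _))
    simp only [dd, dx₄, dz, add_dotProduct, adj, f5]
    module
  have hzxz : z ⬝ᵥ S x z = 0 := by
    have e := f6 x₂
    simpa only [← adj, comm x₃ x₂, ← hz, ← hx₃, h23, zero_dotProduct, smul_zero, zero_add,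
      add_zero] using e
  have f8 (y) : (8 : ℚ) • (y ⬝ᵥ S x (S x₂ (S x z))) + y ⬝ᵥ S z z = 0 := by
    refine Eq.trans ?_ ((congrArg (dirDeriv y) hzxz).trans (map_zero _))
    simp only [dd, dS, dx, dz, Sadd, add_dotProduct, adj]
    module
  have h2zz : x₂ ⬝ᵥ S z z = 0 := by
    have e := f8 x₂
    rwa [← adj, ← hx₃, ← adj, h23, zero_dotProduct, smul_zero, zero_add] at e
  have hxzxz : S x z ⬝ᵥ S x z = 0 := by
    refine half (c := 2) two_ne_zero ?_ (f3 z)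
    have e : z ⬝ᵥ S x₂ z = 0 := by rw [← adj, comm, adj, h2zz]
    rw [e, adj]
    module
  have g1 : grad (zhaoSeq P 1) = (1 / 2 : ℚ) • x₂ := by rw [zhaoSeq, gradP, hx₂]
  have q2 : zhaoSeq P 2 = (1 / 8 : ℚ) • (x₂ ⬝ᵥ x₂) := by
    rw [zhaoSeq_add_two]
    simp only [Finset.sum_range_succ, Finset.sum_range_zero, Nat.reduceAdd, Nat.reduceSub, g1,
      smul_dotProduct, dotProduct_smul]
    module
  have g2 : grad (zhaoSeq P 2) = (1 / 2 : ℚ) • x₃ := grad_eq fun y => by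
    simp only [q2, map_rat_smul, dd, dx₂, add_dotProduct, adj, ← hx₃, dotProduct_smul]
    module
  have q3 : zhaoSeq P 3 = (1 / 8 : ℚ) • (x₂ ⬝ᵥ x₃) := by
    rw [zhaoSeq_add_two]
    simp only [Finset.sum_range_succ, Finset.sum_range_zero, Nat.reduceAdd, Nat.reduceSub, g1, g2,
      smul_dotProduct, dotProduct_smul, dotProduct_comm x₃]
    module
  have g3 : grad (zhaoSeq P 3) = (1 / 2 : ℚ) • x₄ + (1 / 8 : ℚ) • z := grad_eq fun y => by
    simp only [q3, map_rat_smul, dd, dx₂, dx₃, add_dotProduct, adj, ← hx₃, ← hx₄, ← hz,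
      dotProduct_add, dotProduct_smul]
    module
  have h24 : x₂ ⬝ᵥ x₄ = 0 := by rw [hx₄, ← adj, ← hx₃, h33]
  have q4 : zhaoSeq P 4 = (1 / 48 : ℚ) • (x₂ ⬝ᵥ z) := by
    rw [zhaoSeq_add_two]
    simp only [Finset.sum_range_succ, Finset.sum_range_zero, Nat.reduceAdd, Nat.reduceSub, g1, g2,
      g3, smul_dotProduct, dotProduct_smul, dotProduct_add, dotProduct_comm _ x₂,
      h24, h33]
    module
  have g4 : grad (zhaoSeq P 4) = (1 / 8 : ℚ) • S x z := grad_eq fun y => by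
    simp only [q4, map_rat_smul, dd, dx₂, dz, add_dotProduct, adj, ← hz, dotProduct_smul]
    module
  have h2xz : x₂ ⬝ᵥ S x z = 0 := by rw [← adj, ← hx₃, h3z]
  have h34 : x₃ ⬝ᵥ x₄ = 0 := by rw [hx₃, adj, hx₅, dotProduct_zero]
  have h44 : x₄ ⬝ᵥ x₄ = 0 := by
    nth_rw 1 [hx₄]
    rw [adj, hx₅, dotProduct_zero]
  have h3xz : x₃ ⬝ᵥ S x z = 0 := by rw [← adj, ← hx₄, h4z]
  have h4xz : x₄ ⬝ᵥ S x z = 0 := by rw [← adj, hx₅, zero_dotProduct]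
  have q5 : zhaoSeq P 5 = 0 := by
    rw [zhaoSeq_add_two]
    simp only [Finset.sum_range_succ, Finset.sum_range_zero, Nat.reduceAdd, Nat.reduceSub, g1, g2,
      g3, g4, smul_dotProduct, dotProduct_smul, dotProduct_add,
      dotProduct_comm _ x₂, dotProduct_comm _ x₃, h2xz, h34, h3z]
    module
  have g5 : grad (zhaoSeq P 5) = 0 := by rw [q5, grad_zero]
  have q6 : zhaoSeq P 6 = 0 := by
    rw [zhaoSeq_add_two]
    simp only [Finset.sum_range_succ, Finset.sum_range_zero, Nat.reduceAdd, Nat.reduceSub, g1, g2,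
      g3, g4, g5, smul_dotProduct, dotProduct_smul, add_dotProduct, dotProduct_add,
      dotProduct_comm _ x₃, dotProduct_comm z x₄, dotProduct_zero, zero_dotProduct, h3xz, h44, h4z,
      hzz]
    module
  have g6 : grad (zhaoSeq P 6) = 0 := by rw [q6, grad_zero]
  have q7 : zhaoSeq P 7 = 0 := by
    rw [zhaoSeq_add_two]
    simp only [Finset.sum_range_succ, Finset.sum_range_zero, Nat.reduceAdd, Nat.reduceSub, g3, g4,
      g5, g6, smul_dotProduct, dotProduct_smul, add_dotProduct, dotProduct_add,
      dotProduct_comm _ x₄, dotProduct_comm _ z, dotProduct_zero, zero_dotProduct, h4xz, hzxz]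
    module
  have g7 : grad (zhaoSeq P 7) = 0 := by rw [q7, grad_zero]
  refine ⟨q5, q6, q7, ?_⟩
  rw [zhaoSeq_add_two]
  simp only [Finset.sum_range_succ, Finset.sum_range_zero, Nat.reduceAdd, Nat.reduceSub, g4,
    g5, g6, g7, smul_dotProduct, dotProduct_smul, dotProduct_zero, zero_dotProduct, hxzxz]
  module

lemma zhaoSeq_eq_zero (hP : P.IsHomogeneous 3) (hH : hessian P ^ 4 = 0) {m : ℕ} (hm : 5 ≤ m) :
    zhaoSeq P m = 0 := by
  obtain ⟨h5, h6, h7, h8⟩ := zhaoSeq_small hP hH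
  induction m using Nat.strong_induction_on with
  | _ m ih =>
    by_cases hm8 : m ≤ 8
    · interval_cases m <;> assumption
    obtain ⟨m, rfl⟩ : ∃ k, m = k + 2 := ⟨m - 2, by lia⟩
    rw [zhaoSeq_add_two, Finset.sum_eq_zero, smul_zero]
    intro k hk
    rw [Finset.mem_range] at hk
    -- the two indices add up to `m + 2 ≥ 9`, so one of them is at least `5`
    by_cases h : 5 ≤ 1 + k
    · rw [ih (1 + k) (by lia) h, grad_zero, zero_dotProduct]
    · rw [ih (m + 1 - k) (by lia) (by lia), grad_zero, dotProduct_zero]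

/-! ### Change of coefficients -/

variable {L : Type*} [CommRing L] [Algebra ℚ L]

lemma zhaoSeq_map (f : K →ₐ[ℚ] L) (P : MvPolynomial (Fin n) K) (m : ℕ) :
    zhaoSeq (map (f : K →+* L) P) m = map (f : K →+* L) (zhaoSeq P m) := by
  induction m using Nat.strong_induction_on with
  | _ m ih =>
    match m with
    | 0 => simp [zhaoSeq]
    | 1 => simp [zhaoSeq]
    | m + 2 =>
      rw [zhaoSeq_add_two, zhaoSeq_add_two, map_rat_smul, map_sum]
      congr 1
      refine Finset.sum_congr rfl fun k hk => ?_
      rw [Finset.mem_range] at hk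
      rw [ih (1 + k) (by lia), ih (m + 1 - k) (by lia)]
      simp [dotProduct, grad, pderiv_map]

omit [Algebra ℚ K] [Algebra ℚ L] in
lemma hessian_map (f : K →+* L) (P : MvPolynomial (Fin n) K) :
    hessian (map f P) = (map f).mapMatrix (hessian P) := by
  ext i j : 2
  simp [hessian, pderiv_map]

end Rational

end ZhaoCubic

end

/-- over `R = ℚ[c_q : |q| = 3]`, with `P = ∑ c_q Xᵠ` the generic
homogeneous polynomial of degree 3, every coefficient of `Q⁽ᵐ⁾` (`m ≥ 5`) lies in
the ideal generated by the coefficients of the entries of `(Hess P)^4`. -/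
theorem generic_cubic_ideal_membership_hessian_fourth_power
    (n : ℕ) (hn : 1 ≤ n) 
    (P : MvPolynomial (Fin n)
      (MvPolynomial {q : Fin n →₀ ℕ // (q.sum fun _ e => e) = 3} ℚ))
    (hPdef : P =
      ∑ q ∈ (Finset.finsuppAntidiag (Finset.univ : Finset (Fin n)) (3)).attach,
        monomial q.1 (X ⟨q.1, (Finset.mem_finsuppAntidiag'.mp q.2).1⟩))
    (I : Ideal (MvPolynomial {q : Fin n →₀ ℕ // (q.sum fun _ e => e) = 3} ℚ))
    (hI : I = Ideal.span {r | ∃ i j : Fin n, ∃ q : Fin n →₀ ℕ,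
        r = coeff q ((hessian P ^ 4) i j)}) :
    ∀ m : ℕ, 5 ≤ m → ∀ q : Fin n →₀ ℕ, coeff q (zhaoSeq P m) ∈ I := by
  intro m hm q
  -- membership of all coefficients in `I` is vanishing over the quotient ring
  have hcoeff (f : MvPolynomial (Fin n) (MvPolynomial {q : Fin n →₀ ℕ //
      (q.sum fun _ e => e) = 3} ℚ)) :
      map (Ideal.Quotient.mkₐ ℚ I : MvPolynomial _ ℚ →+* MvPolynomial _ ℚ ⧸ I) f = 0 ↔ ∀ q, coeff q f ∈ I := by
    simp [MvPolynomial.ext_iff, coeff_map, Ideal.Quotient.eq_zero_iff_mem]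
  have hP : P.IsHomogeneous 3 := by
    rw [hPdef]
    refine IsHomogeneous.sum _ _ _ fun q _ => isHomogeneous_monomial _ ?_
    exact (Finset.mem_finsuppAntidiag'.mp q.2).1
  refine (hcoeff _).mp ?_ q
  rw [← ZhaoCubic.zhaoSeq_map]
  refine ZhaoCubic.zhaoSeq_eq_zero (hP.map _) ?_ hm
  rw [ZhaoCubic.hessian_map, ← map_pow]
  refine Matrix.ext fun i j => ?_
  refine (hcoeff _).mpr fun q => ?_
  rw [hI]
  exact Ideal.subset_span ⟨i, j, q, rfl⟩
end
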